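/- Let F be a field, let c : ℕ → F, let l ≥ 2 be a natural number such that c_{l−i} = c_i for all 1 ≤ i ≤ l−1 (palindromic period). Let Ψ_n denote the product [[c_0,1],[1,0]]·[[c_1,1],[1,0]]⋯[[c_n,1],[1,0]], with Ψ_{−1} the identity matrix, and write p_n = (Ψ_n)_{1,1}, q_n = (Ψ_n)_{2,1}. Then the matrix Ψ_0⁻¹·Ψ_{l−1} is symmetric; equivalently, q_{l−2} = p_{l−1} − c_0·q_{l−1}. -/

import Mathlib

/-!
Each factor `[[a,1],[1,0]]` is symmetric, so transposing `∏_{i=1}^{l-1} [[c_i,1],[1,0]]` only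
reverses the order of its factors; for a palindromic period this gives the same product back.
That product is `Ψ_0⁻¹·Ψ_{l-1}`. Its entry `(0,1)` is `q_{l-2}` and its entry `(1,0)` is
`p_{l-1} - c_0·q_{l-1}`, which yields the second form.
-/

/-- The elementary continued-fraction matrix `[[a,1],[1,0]]`. -/
def cfMat {F : Type*} [Field F] (a : F) : Matrix (Fin 2) (Fin 2) F := !![a, 1; 1, 0]

/-- `Ψ_n = [[c_0,1],[1,0]]·[[c_1,1],[1,0]]⋯[[c_n,1],[1,0]]`, the matrix of convergents. -/
def cfPsi {F : Type*} [Field F] (c : ℕ → F) (n : ℕ) : Matrix (Fin 2) (Fin 2) F :=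
  ((List.range (n + 1)).map fun i => cfMat (c i)).prod

/-- The numerator `p_n` of the `n`-th convergent. -/
def cfP {F : Type*} [Field F] (c : ℕ → F) (n : ℕ) : F := cfPsi c n 0 0

/-- The denominator `q_n` of the `n`-th convergent. -/
def cfQ {F : Type*} [Field F] (c : ℕ → F) (n : ℕ) : F := cfPsi c n 1 0

/-- The factors with indices `1, …, m + 1`, i.e. `Ψ_{m+1}` without its first factor. -/
def cfTail {F : Type*} [Field F] (c : ℕ → F) (m : ℕ) : Matrix (Fin 2) (Fin 2) F :=
  ((List.range (m + 1)).map fun i => cfMat (c (i + 1))).prod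

theorem cfPsi_zero {F : Type*} [Field F] (c : ℕ → F) : cfPsi c 0 = cfMat (c 0) := by
  simp [cfPsi]

theorem cfPsi_succ_eq_mul_cfTail {F : Type*} [Field F] (c : ℕ → F) (m : ℕ) :
    cfPsi c (m + 1) = cfMat (c 0) * cfTail c m := by
  rw [cfPsi, List.range_succ_eq_map, List.map_cons, List.prod_cons, List.map_map]
  rfl

theorem cfPsi_succ {F : Type*} [Field F] (c : ℕ → F) (m : ℕ) :
    cfPsi c (m + 1) = cfPsi c m * cfMat (c (m + 1)) := by
  rw [cfPsi, List.range_succ, List.map_append, List.prod_append, List.map_singleton,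
    List.prod_singleton, cfPsi]

theorem cfMat_transpose {F : Type*} [Field F] (a : F) : (cfMat a).transpose = cfMat a := by
  ext i j
  fin_cases i <;> fin_cases j <;> rfl

theorem isUnit_det_cfMat {F : Type*} [Field F] (a : F) : IsUnit (cfMat a).det := by
  simp [cfMat, Matrix.det_fin_two]

theorem cfTail_isSymm {F : Type*} [Field F] (c : ℕ → F) (m : ℕ)
    (hpal : ∀ i, 1 ≤ i → i ≤ m + 1 → c (m + 2 - i) = c i) : (cfTail c m).IsSymm := by
  rw [Matrix.IsSymm, cfTail, Matrix.transpose_list_prod]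
  congr 1
  apply List.ext_getElem
  · simp
  · intro i h₁ h₂
    have hi : i < m + 1 := by simpa using h₂
    have h := hpal (i + 1) (by omega) (by omega)
    have e : m + 2 - (i + 1) = m - i + 1 := by omega
    rw [e] at h
    simp [cfMat_transpose, h]

/-- For a palindromic period `c_{l−i} = c_i` (`1 ≤ i ≤ l−1`), the matrix `Ψ_0⁻¹·Ψ_{l−1}`
is symmetric; equivalently, `q_{l−2} = p_{l−1} − c_0·q_{l−1}`. -/
theorem cfPsi_palindrome_symm {F : Type*} [Field F] (c : ℕ → F) (l : ℕ) (hl : 2 ≤ l)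
    (hpal : ∀ i, 1 ≤ i → i ≤ l - 1 → c (l - i) = c i) :
    ((cfPsi c 0)⁻¹ * cfPsi c (l - 1)).IsSymm ∧
    cfQ c (l - 2) = cfP c (l - 1) - c 0 * cfQ c (l - 1) := by
  obtain ⟨m, rfl⟩ := Nat.exists_eq_add_of_le' hl
  have hsymm : (cfTail c m).IsSymm := cfTail_isSymm c m hpal
  change ((cfPsi c 0)⁻¹ * cfPsi c (m + 1)).IsSymm ∧
    cfQ c m = cfP c (m + 1) - c 0 * cfQ c (m + 1)
  constructor
  · rwa [cfPsi_zero, cfPsi_succ_eq_mul_cfTail,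
      Matrix.nonsing_inv_mul_cancel_left _ _ (isUnit_det_cfMat _)]
  · have hoff : cfTail c m 1 0 = cfTail c m 0 1 := hsymm.apply 0 1
    -- The last column of `Ψ_{m+1} = Ψ_m·[[c_{m+1},1],[1,0]]` is the first column of `Ψ_m`.
    have hq : cfQ c m = cfPsi c (m + 1) 1 1 := by
      simp [cfPsi_succ, cfQ, cfMat, Matrix.mul_apply, Fin.sum_univ_two]
    rw [hq, cfP, cfQ, cfPsi_succ_eq_mul_cfTail]
    simp [cfMat, Matrix.mul_apply, Fin.sum_univ_two, hoff]
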